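/- arXiv:1407.2679 — 3 statements merged into one kernel-verified Lean document; each statement's English description precedes it below -/
import Mathlib

section
/- If a polynomial p ∈ ℝ[x₁,…,xₙ] is a sum of squares of polynomials, then for every face F of the Newton polytope New(p), the polynomial Proj(p,F) is a sum of squares of polynomials. -/
open MvPolynomial
open scoped Classical

noncomputable section

/-- Embed an exponent vector `a ∈ ℕⁿ` into `ℝⁿ`. -/
def toR {n : ℕ} (a : Fin n →₀ ℕ) : Fin n → ℝ := fun i => (a i : ℝ)

/-- `p` is a sum of squares of polynomials. -/
def IsSOS {n : ℕ} (p : MvPolynomial (Fin n) ℝ) : Prop :=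
  ∃ (s : ℕ) (q : Fin s → MvPolynomial (Fin n) ℝ), p = ∑ i, (q i) ^ 2

/-- `Proj(p,T)` for `T ⊆ ℝⁿ`: delete every term of `p` whose exponent vector is not in `T`. -/
def projR {n : ℕ} (p : MvPolynomial (Fin n) ℝ) (T : Set (Fin n → ℝ)) :
    MvPolynomial (Fin n) ℝ :=
  ∑ a ∈ p.support, if toR a ∈ T then monomial a (p.coeff a) else 0

/-- `Proj(p,T)` for `T ⊆ ℕⁿ`. -/
def projN {n : ℕ} (p : MvPolynomial (Fin n) ℝ) (T : Set (Fin n →₀ ℕ)) :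
    MvPolynomial (Fin n) ℝ :=
  ∑ a ∈ p.support, if a ∈ T then monomial a (p.coeff a) else 0

/-- The Newton polytope of `p`: convex hull of its support in `ℝⁿ`. -/
def newton {n : ℕ} (p : MvPolynomial (Fin n) ℝ) : Set (Fin n → ℝ) :=
  convexHull ℝ (toR '' ↑p.support)

/-- `F` is an (exposed) face of `N`: `F ⊆ N`, and either `F = N` or there is an
affine function vanishing on `F` and strictly positive on `N \ F`. -/
def IsFace {n : ℕ} (N F : Set (Fin n → ℝ)) : Prop :=
  F ⊆ N ∧ (F = N ∨ ∃ π : (Fin n → ℝ) →ᵃ[ℝ] ℝ,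
    (∀ x ∈ F, π x = 0) ∧ ∀ x ∈ N \ F, 0 < π x)

/-- `SOSS(p,G)`: whenever `p` is SOS, it has an SOS decomposition all of whose
summands have support contained in `G`. -/
def SOSS {n : ℕ} (p : MvPolynomial (Fin n) ℝ) (G : Finset (Fin n →₀ ℕ)) : Prop :=
  IsSOS p → ∃ (s : ℕ) (q : Fin s → MvPolynomial (Fin n) ℝ),
    p = ∑ i, (q i) ^ 2 ∧ ∀ i, (q i).support ⊆ G

/-- `V(p,G)`: elements `a ∈ G` whose double has the unique decomposition `a + a` in `G + G`. -/
def VSet {n : ℕ} (G : Finset (Fin n →₀ ℕ)) : Set (Fin n →₀ ℕ) :=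
  {a | a ∈ G ∧ ∀ b ∈ G, ∀ r ∈ G, b + r = a + a → b = a ∧ r = a}

/-- Membership in `Relat(a)` (least fixed point of the recursive definition):
`Relat(a) = {a/2}` if the unique decomposition of `a` in `G + G` is `a/2 + a/2`;
otherwise `Relat(a)` is the union of `Relat(2b) ∪ Relat(2r)` over decompositions
`a = b + r` with `b ≠ r`, `b, r ∈ G`; and `Relat(a) = ∅` if `a ∉ G + G`. -/
inductive RelatMem {n : ℕ} (G : Finset (Fin n →₀ ℕ)) :
    (Fin n →₀ ℕ) → (Fin n →₀ ℕ) → Prop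
  | base (a c : Fin n →₀ ℕ) (hc : c ∈ G) (hcc : c + c = a)
      (huniq : ∀ b ∈ G, ∀ r ∈ G, b + r = a → b = c) : RelatMem G a c
  | stepL (a b r v : Fin n →₀ ℕ) (hb : b ∈ G) (hr : r ∈ G) (hne : b ≠ r)
      (hbr : b + r = a) (hv : RelatMem G (b + b) v) : RelatMem G a v
  | stepR (a b r v : Fin n →₀ ℕ) (hb : b ∈ G) (hr : r ∈ G) (hne : b ≠ r)
      (hbr : b + r = a) (hv : RelatMem G (r + r) v) : RelatMem G a v

/-- `Relat(a)` as a set. -/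
def Relat {n : ℕ} (G : Finset (Fin n →₀ ℕ)) (a : Fin n →₀ ℕ) : Set (Fin n →₀ ℕ) :=
  {v | RelatMem G a v}

/-- `σ(T) = {r ∈ G : Relat(2r) ⊆ T}`. -/
def sigmaSet {n : ℕ} (G : Finset (Fin n →₀ ℕ)) (T : Set (Fin n →₀ ℕ)) :
    Set (Fin n →₀ ℕ) :=
  {r | r ∈ G ∧ Relat G (r + r) ⊆ T}

/-- `p` is a split polynomial with respect to `T₁, …, T_u ⊆ V(p,G)`. -/
def IsSplit {n : ℕ} (p : MvPolynomial (Fin n) ℝ) (G : Finset (Fin n →₀ ℕ))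
    (u : ℕ) (T : Fin u → Set (Fin n →₀ ℕ)) : Prop :=
  SOSS p G ∧ (∀ i, T i ⊆ VSet G) ∧ (∀ i, (T i).Nonempty) ∧
  (∀ i j, i ≠ j → Disjoint (T i) (T j)) ∧
  (∀ i, ∀ a ∈ sigmaSet G (T i), ∀ b ∈ sigmaSet G (T i), Relat G (a + b) ⊆ T i) ∧
  ∀ a ∈ p.support, ∃! i, Relat G a ⊆ T i

/-- The sub-polynomial `Σ_{a ∈ Support(p), Relat(a) ⊆ T} c_a x^a` of `p`. -/
def projRelat {n : ℕ} (p : MvPolynomial (Fin n) ℝ) (G : Finset (Fin n →₀ ℕ))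
    (T : Set (Fin n →₀ ℕ)) : MvPolynomial (Fin n) ℝ :=
  ∑ a ∈ p.support, if Relat G a ⊆ T then monomial a (p.coeff a) else 0

/-- `p` is a convex cover polynomial: some pairwise disjoint faces of `New(p)`
cover `Support(p)`. -/
def IsConvexCover {n : ℕ} (p : MvPolynomial (Fin n) ℝ) : Prop :=
  ∃ (u : ℕ) (F : Fin u → Set (Fin n → ℝ)),
    (∀ i, IsFace (newton p) (F i)) ∧
    (∀ i j, i ≠ j → Disjoint (F i) (F j)) ∧
    toR '' ↑p.support ⊆ ⋃ i, F i

end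

/-!
An affine function exposing `F` is a weight minus a constant `c` on exponent vectors, so every
exponent of `p` has weight at least `c`, and `Proj(p, F)` is the component of `p` of weight `c`.
Write `p = ∑ qᵢ²` and let `m` be the least weight occurring in any `qᵢ`. The component of `p` of
weight `2m` is the sum of the squares of the weight-`m` components of the `qᵢ`; over an ordered ring
these squares cannot cancel, so `2m ≥ c`. Comparing components of weight `c` then gives
`Proj(p, F) = ∑ rᵢ²`, where `rᵢ` is the component of `qᵢ` of weight `c / 2`.
-/

section LowestWeightComponent

variable {σ ι R M : Type*} {w : σ → M}

theorem weightedHomogeneousComponent_mul_of_le_weight [CommSemiring R] [AddCommMonoid M]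
    [PartialOrder M] [IsOrderedCancelAddMonoid M] {s t : M} {p q : MvPolynomial σ R}
    (hp : ∀ a ∈ p.support, s ≤ Finsupp.weight w a)
    (hq : ∀ b ∈ q.support, t ≤ Finsupp.weight w b) :
    weightedHomogeneousComponent w (s + t) (p * q) =
      weightedHomogeneousComponent w s p * weightedHomogeneousComponent w t q := by
  ext d
  simp only [coeff_weightedHomogeneousComponent, coeff_mul, Finset.ite_sum_zero,
    ite_zero_mul_ite_zero]
  refine Finset.sum_congr rfl fun ⟨a, b⟩ hab => ?_
  obtain rfl : a + b = d := Finset.HasAntidiagonal.mem_antidiagonal.mp hab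
  by_cases ha : a ∈ p.support
  · by_cases hb : b ∈ q.support
    · have weight_add_eq_iff : Finsupp.weight w (a + b) = s + t ↔
          Finsupp.weight w a = s ∧ Finsupp.weight w b = t := by
        simpa only [map_add, eq_comm] using add_eq_add_iff_eq_and_eq (hp a ha) (hq b hb)
      simp only [weight_add_eq_iff]
    · simp only [notMem_support_iff.mp hb, mul_zero, ite_self]
  · simp only [notMem_support_iff.mp ha, zero_mul, ite_self]

theorem weightedHomogeneousComponent_sum_sq_of_le_weight [CommSemiring R] [AddCommMonoid M]
    [PartialOrder M] [IsOrderedCancelAddMonoid M] {t : M} {s : Finset ι}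
    {q : ι → MvPolynomial σ R} (hq : ∀ i ∈ s, ∀ a ∈ (q i).support, t ≤ Finsupp.weight w a) :
    weightedHomogeneousComponent w (t + t) (∑ i ∈ s, q i ^ 2) =
      ∑ i ∈ s, weightedHomogeneousComponent w t (q i) ^ 2 := by
  rw [map_sum]
  refine Finset.sum_congr rfl fun i hi => ?_
  rw [sq, sq, weightedHomogeneousComponent_mul_of_le_weight (hq i hi) (hq i hi)]

variable [CommRing R] [LinearOrder R] [IsStrictOrderedRing R]

theorem mvPolynomial_eq_zero_of_sum_sq_eq_zero {s : Finset ι} {q : ι → MvPolynomial σ R}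
    (h : ∑ i ∈ s, q i ^ 2 = 0) {i : ι} (hi : i ∈ s) : q i = 0 := by
  refine MvPolynomial.funext fun x => ?_
  have sum_eval_sq : ∑ j ∈ s, eval x (q j) ^ 2 = 0 := by
    simpa only [map_sum, map_pow, map_zero] using congrArg (eval x) h
  have eval_sq := (Finset.sum_eq_zero_iff_of_nonneg fun j _ => sq_nonneg _).mp sum_eval_sq i hi
  rw [map_zero, pow_eq_zero_iff two_ne_zero |>.mp eval_sq]

variable [AddCommMonoid M] [LinearOrder M] [IsOrderedCancelAddMonoid M]

theorem le_weight_of_add_self_le_weight_sum_sq {t : M} {s : Finset ι} {q : ι → MvPolynomial σ R}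
    (h : ∀ a ∈ (∑ i ∈ s, q i ^ 2).support, t + t ≤ Finsupp.weight w a) :
    ∀ i ∈ s, ∀ a ∈ (q i).support, t ≤ Finsupp.weight w a := by
  by_contra! ⟨i, hi, a, ha, hat⟩
  have mem_exponents {j b} (hj : j ∈ s) (hb : b ∈ (q j).support) :
      b ∈ s.biUnion fun j => (q j).support := Finset.mem_biUnion.mpr ⟨j, hj, hb⟩
  obtain ⟨b, hb, b_min⟩ := Finset.exists_min_image _ (Finsupp.weight w) ⟨a, mem_exponents hi ha⟩
  obtain ⟨j, hj, hbj⟩ := Finset.mem_biUnion.mp hb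
  set m := Finsupp.weight w b
  have hmt : m < t := (b_min a (mem_exponents hi ha)).trans_lt hat
  have sum_component_sq : ∑ i ∈ s, weightedHomogeneousComponent w m (q i) ^ 2 = 0 := by
    rw [← weightedHomogeneousComponent_sum_sq_of_le_weight
      fun i hi a ha => b_min a (mem_exponents hi ha)]
    exact weightedHomogeneousComponent_eq_zero' _ _
      fun d hd => ((add_lt_add hmt hmt).trans_le (h d hd)).ne'
  have component_eq_zero := mvPolynomial_eq_zero_of_sum_sq_eq_zero sum_component_sq hj
  have coeff_b := congrArg (coeff b) component_eq_zero
  rw [coeff_weightedHomogeneousComponent, if_pos rfl, coeff_zero] at coeff_b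
  exact mem_support_iff.mp hbj coeff_b

theorem weightedHomogeneousComponent_sum_sq_of_add_self_le_weight {t : M} {s : Finset ι}
    {q : ι → MvPolynomial σ R}
    (h : ∀ a ∈ (∑ i ∈ s, q i ^ 2).support, t + t ≤ Finsupp.weight w a) :
    weightedHomogeneousComponent w (t + t) (∑ i ∈ s, q i ^ 2) =
      ∑ i ∈ s, weightedHomogeneousComponent w t (q i) ^ 2 :=
  weightedHomogeneousComponent_sum_sq_of_le_weight (le_weight_of_add_self_le_weight_sum_sq h)

end LowestWeightComponent

section Face

variable {n : ℕ} {p : MvPolynomial (Fin n) ℝ}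

theorem coeff_projR (T : Set (Fin n → ℝ)) (d : Fin n →₀ ℕ) :
    coeff d (projR p T) = if toR d ∈ T then coeff d p else 0 := by
  simp only [projR, coeff_sum, apply_ite (coeff d), coeff_monomial, coeff_zero]
  rw [Finset.sum_eq_single d]
  · rw [if_pos rfl]
  · intro a _ had
    rw [if_neg had, ite_self]
  · intro hd
    rw [notMem_support_iff.mp hd, ite_self, ite_self]

theorem projR_eq_weightedHomogeneousComponent {M : Type*} [AddCommMonoid M]
    {T : Set (Fin n → ℝ)} {w : Fin n → M} {c : M}
    (h : ∀ a ∈ p.support, toR a ∈ T ↔ Finsupp.weight w a = c) :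
    projR p T = weightedHomogeneousComponent w c p := by
  ext d
  rw [coeff_projR, coeff_weightedHomogeneousComponent]
  by_cases hd : d ∈ p.support
  · simp only [h d hd]
  · simp only [notMem_support_iff.mp hd, ite_self]

theorem toR_mem_newton {a : Fin n →₀ ℕ} (ha : a ∈ p.support) : toR a ∈ newton p :=
  subset_convexHull ℝ _ (Set.mem_image_of_mem toR ha)

theorem affineMap_apply_toR {V : Type*} [AddCommGroup V] [Module ℝ V]
    (π : (Fin n → ℝ) →ᵃ[ℝ] V) (a : Fin n →₀ ℕ) :
    π (toR a) = Finsupp.weight (fun i => π.linear (Pi.single i 1)) a + π 0 := by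
  have toR_eq_sum : toR a = ∑ i, a i • Pi.single i (1 : ℝ) := by
    ext j
    simp [toR, Pi.single_apply]
  rw [congrFun π.decomp (toR a), Pi.add_apply, toR_eq_sum, map_sum, Finsupp.weight_eq_sum]
  simp only [map_nsmul]

theorem IsFace.exists_affineMap {N F : Set (Fin n → ℝ)} (hF : IsFace N F) :
    ∃ π : (Fin n → ℝ) →ᵃ[ℝ] ℝ, ∀ x ∈ N, 0 ≤ π x ∧ (x ∈ F ↔ π x = 0) := by
  obtain ⟨-, rfl | ⟨π, π_zero, π_pos⟩⟩ := hF
  · exact ⟨0, fun x hx => ⟨le_rfl, iff_of_true hx rfl⟩⟩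
  · refine ⟨π, fun x hx => ?_⟩
    by_cases hxF : x ∈ F
    · exact ⟨(π_zero x hxF).ge, iff_of_true hxF (π_zero x hxF)⟩
    · have hpos : 0 < π x := π_pos x ⟨hx, hxF⟩
      exact ⟨hpos.le, iff_of_false hxF hpos.ne'⟩

theorem IsFace.exists_weight {F : Set (Fin n → ℝ)} (hF : IsFace (newton p) F) :
    ∃ (w : Fin n → ℝ) (c : ℝ), ∀ a ∈ p.support,
      c ≤ Finsupp.weight w a ∧ (toR a ∈ F ↔ Finsupp.weight w a = c) := by
  obtain ⟨π, hπ⟩ := hF.exists_affineMap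
  refine ⟨fun i => π.linear (Pi.single i 1), -π 0, fun a ha => ?_⟩
  rw [neg_le_iff_add_nonneg, eq_neg_iff_add_eq_zero, ← affineMap_apply_toR]
  exact hπ _ (toR_mem_newton ha)

end Face

/-- if `p` is SOS then `Proj(p,F)` is SOS for every face `F` of `New(p)`. -/
theorem statement2 {n : ℕ} (p : MvPolynomial (Fin n) ℝ) (hp : IsSOS p)
    (F : Set (Fin n → ℝ)) (hF : IsFace (newton p) F) :
    IsSOS (projR p F) := by
  obtain ⟨s, q, rfl⟩ := hp
  obtain ⟨w, c, hw⟩ := hF.exists_weight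
  obtain ⟨t, rfl⟩ : ∃ t, c = t + t := ⟨c / 2, (add_halves c).symm⟩
  refine ⟨s, fun i => weightedHomogeneousComponent w t (q i), ?_⟩
  rw [projR_eq_weightedHomogeneousComponent fun a ha => (hw a ha).2]
  exact weightedHomogeneousComponent_sum_sq_of_add_self_le_weight fun a ha => (hw a ha).1
end

section
/- Suppose p = Σ_a c_a x^a ∈ ℝ[x₁,…,xₙ] is a split polynomial with respect to T₁,…,T_u. Then p is SOS if and only if each pᵢ = Σ_{a ∈ Support(p), Relat(a) ⊆ Tᵢ} c_a x^a is SOS, for i = 1,…,u. -/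
open MvPolynomial
open scoped Classical

/-!
Restricting a polynomial to the exponents in a set is linear, and it is multiplicative as soon as
membership of `x + y` in the target set splits as membership of `x` and of `y` in the source sets.
Closure of `σ(Tᵢ)` in the sense of condition (1) says exactly that, for `x, y ∈ G`,
`Relat(x + y) ⊆ Tᵢ` iff `x, y ∈ σ(Tᵢ)`. Hence restricting each summand of a decomposition
`p = Σ qₖ²` supported in `G` to `σ(Tᵢ)` yields a decomposition of `pᵢ`. Conversely, condition (2)
says that `p = Σ pᵢ`.
-/

theorem isSOS_zero {n : ℕ} : IsSOS (0 : MvPolynomial (Fin n) ℝ) :=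
  ⟨0, 0, by simp⟩

theorem IsSOS.add {n : ℕ} {p q : MvPolynomial (Fin n) ℝ} (hp : IsSOS p) (hq : IsSOS q) :
    IsSOS (p + q) := by
  obtain ⟨s, f, rfl⟩ := hp
  obtain ⟨t, g, rfl⟩ := hq
  exact ⟨s + t, Fin.append f g, by simp [Fin.sum_univ_add]⟩

theorem IsSOS.sum {n : ℕ} {ι : Type*} {s : Finset ι} {f : ι → MvPolynomial (Fin n) ℝ}
    (hf : ∀ i ∈ s, IsSOS (f i)) : IsSOS (∑ i ∈ s, f i) :=
  Finset.sum_induction f IsSOS (fun _ _ => IsSOS.add) isSOS_zero hf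

theorem coeff_projN {n : ℕ} (p : MvPolynomial (Fin n) ℝ) (S : Set (Fin n →₀ ℕ))
    (e : Fin n →₀ ℕ) : (projN p S).coeff e = if e ∈ S then p.coeff e else 0 := by
  have coeff_term (a : Fin n →₀ ℕ) :
      (if a ∈ S then monomial a (p.coeff a) else 0).coeff e =
        if a = e then (if e ∈ S then p.coeff e else 0) else 0 := by
    rcases eq_or_ne a e with rfl | hae
    · rw [if_pos rfl]
      split_ifs <;> simp
    · split_ifs <;> simp [coeff_monomial, hae]
  rw [projN, coeff_sum, Finset.sum_congr rfl fun a _ => coeff_term a, Finset.sum_ite_eq',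
    ite_eq_left_iff]
  intro he
  rw [notMem_support_iff.mp he, ite_self]

theorem projN_sum {n : ℕ} {ι : Type*} (s : Finset ι) (f : ι → MvPolynomial (Fin n) ℝ)
    (S : Set (Fin n →₀ ℕ)) : projN (∑ i ∈ s, f i) S = ∑ i ∈ s, projN (f i) S := by
  ext e
  simp only [coeff_projN, coeff_sum, Finset.sum_ite_irrel, Finset.sum_const_zero]

theorem projN_mul {n : ℕ} {q r : MvPolynomial (Fin n) ℝ} {E S S' : Set (Fin n →₀ ℕ)}
    (h : ∀ x ∈ q.support, ∀ y ∈ r.support, x + y ∈ E ↔ x ∈ S ∧ y ∈ S') :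
    projN (q * r) E = projN q S * projN r S' := by
  have coeff_mul_coeff (x y : Fin n →₀ ℕ) :
      (if x + y ∈ E then q.coeff x * r.coeff y else 0) =
        (projN q S).coeff x * (projN r S').coeff y := by
    rw [coeff_projN, coeff_projN, ite_zero_mul_ite_zero]
    by_cases hx : x ∈ q.support
    · by_cases hy : y ∈ r.support
      · simp only [h x hx y hy]
      · simp only [notMem_support_iff.mp hy, mul_zero, ite_self]
    · simp only [notMem_support_iff.mp hx, zero_mul, ite_self]
  ext e
  calc (projN (q * r) E).coeff e
      = ∑ z ∈ Finset.HasAntidiagonal.antidiagonal e,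
          if e ∈ E then q.coeff z.1 * r.coeff z.2 else 0 := by
        rw [coeff_projN, coeff_mul, Finset.sum_ite_irrel, Finset.sum_const_zero]
    _ = ∑ z ∈ Finset.HasAntidiagonal.antidiagonal e,
          (projN q S).coeff z.1 * (projN r S').coeff z.2 :=
        Finset.sum_congr rfl fun z hz => by
          rw [← coeff_mul_coeff, Finset.HasAntidiagonal.mem_antidiagonal.mp hz]
    _ = (projN q S * projN r S').coeff e := (coeff_mul _ _ e).symm

theorem exists_sum_projN_eq_self {n : ℕ} {ι : Type*} {p : MvPolynomial (Fin n) ℝ}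
    {S : ι → Set (Fin n →₀ ℕ)} (h : ∀ a ∈ p.support, ∃! i, a ∈ S i) :
    ∃ I : Finset ι, ∑ i ∈ I, projN p (S i) = p := by
  choose part mem_part part_unique using h
  refine ⟨p.support.attach.image fun a => part a.1 a.2, ?_⟩
  ext e
  simp only [coeff_sum, coeff_projN]
  by_cases he : e ∈ p.support
  · have part_mem : part e he ∈ p.support.attach.image fun a => part a.1 a.2 :=
      Finset.mem_image_of_mem (fun a : p.support => part a.1 a.2)
        (p.support.mem_attach ⟨e, he⟩)
    rw [Finset.sum_eq_single_of_mem _ part_mem fun i _ hi =>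
      if_neg fun hei => hi (part_unique e he i hei), if_pos (mem_part e he)]
  · simp only [notMem_support_iff.mp he, ite_self, Finset.sum_const_zero]

theorem projRelat_eq_projN {n : ℕ} (p : MvPolynomial (Fin n) ℝ) (G : Finset (Fin n →₀ ℕ))
    (T : Set (Fin n →₀ ℕ)) : projRelat p G T = projN p {a | Relat G a ⊆ T} :=
  rfl

theorem relat_add_self_subset_relat_add {n : ℕ} {G : Finset (Fin n →₀ ℕ)} {x y : Fin n →₀ ℕ}
    (hx : x ∈ G) (hy : y ∈ G) : Relat G (x + x) ⊆ Relat G (x + y) := by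
  rcases eq_or_ne x y with rfl | hxy
  · rfl
  · exact fun v hv => RelatMem.stepL _ x y v hx hy hxy rfl hv

theorem relat_add_subset_iff {n : ℕ} {G : Finset (Fin n →₀ ℕ)} {T : Set (Fin n →₀ ℕ)}
    (hT : ∀ a ∈ sigmaSet G T, ∀ b ∈ sigmaSet G T, Relat G (a + b) ⊆ T)
    {x y : Fin n →₀ ℕ} (hx : x ∈ G) (hy : y ∈ G) :
    Relat G (x + y) ⊆ T ↔ x ∈ sigmaSet G T ∧ y ∈ sigmaSet G T := by
  refine ⟨fun hxy => ⟨⟨hx, ?_⟩, ⟨hy, ?_⟩⟩, fun ⟨hxT, hyT⟩ => hT x hxT y hyT⟩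
  · exact (relat_add_self_subset_relat_add hx hy).trans hxy
  · exact (relat_add_self_subset_relat_add hy hx).trans (add_comm x y ▸ hxy)

theorem projRelat_sum_sq {n : ℕ} {ι : Type*} {s : Finset ι} {q : ι → MvPolynomial (Fin n) ℝ}
    {G : Finset (Fin n →₀ ℕ)} {T : Set (Fin n →₀ ℕ)} (hq : ∀ k ∈ s, (q k).support ⊆ G)
    (hT : ∀ a ∈ sigmaSet G T, ∀ b ∈ sigmaSet G T, Relat G (a + b) ⊆ T) :
    projRelat (∑ k ∈ s, q k ^ 2) G T = ∑ k ∈ s, projN (q k) (sigmaSet G T) ^ 2 := by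
  rw [projRelat_eq_projN, projN_sum]
  refine Finset.sum_congr rfl fun k hk => ?_
  rw [sq, sq]
  exact projN_mul fun x hx y hy => relat_add_subset_iff hT (hq k hk hx) (hq k hk hy)

theorem IsSOS.projRelat {n : ℕ} {p : MvPolynomial (Fin n) ℝ} {G : Finset (Fin n →₀ ℕ)}
    {T : Set (Fin n →₀ ℕ)} (hp : IsSOS p) (hG : SOSS p G)
    (hT : ∀ a ∈ sigmaSet G T, ∀ b ∈ sigmaSet G T, Relat G (a + b) ⊆ T) :
    IsSOS (projRelat p G T) := by
  obtain ⟨s, q, rfl, hq⟩ := hG hp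
  exact ⟨s, fun k => projN (q k) (sigmaSet G T), projRelat_sum_sq (fun k _ => hq k) hT⟩

theorem statement8_general {n : ℕ} {ι : Type*} {p : MvPolynomial (Fin n) ℝ}
    {G : Finset (Fin n →₀ ℕ)} {T : ι → Set (Fin n →₀ ℕ)} (hG : SOSS p G)
    (hT : ∀ i, ∀ a ∈ sigmaSet G (T i), ∀ b ∈ sigmaSet G (T i), Relat G (a + b) ⊆ T i)
    (hp : ∀ a ∈ p.support, ∃! i, Relat G a ⊆ T i) :
    IsSOS p ↔ ∀ i, IsSOS (projRelat p G (T i)) := by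
  refine ⟨fun hsos i => hsos.projRelat hG (hT i), fun hsos => ?_⟩
  obtain ⟨I, sum_projRelat⟩ : ∃ I : Finset ι, ∑ i ∈ I, projRelat p G (T i) = p :=
    exists_sum_projN_eq_self hp
  exact sum_projRelat ▸ IsSOS.sum fun i _ => hsos i

/-- a split polynomial `p` with respect to `T₁,…,T_u` is SOS iff each
`pᵢ = Σ_{a ∈ Support(p), Relat(a) ⊆ Tᵢ} c_a x^a` is SOS. -/
theorem statement8 {n : ℕ} (p : MvPolynomial (Fin n) ℝ) (G : Finset (Fin n →₀ ℕ))
    (u : ℕ) (T : Fin u → Set (Fin n →₀ ℕ)) (hsplit : IsSplit p G u T) :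
    IsSOS p ↔ ∀ i, IsSOS (projRelat p G (T i)) := by
  obtain ⟨hG, -, -, -, hT, hp⟩ := hsplit
  exact statement8_general hG hT hp
end

section
/- In the setting of the proof that convex cover polynomials are split polynomials: let p ∈ ℝ[x₁,…,xₙ], let G ⊆ ℕⁿ be a finite set satisfying SOSS(p,G) with conv(G+G) = New(p), let F be a face of New(p), and let T = {a ∈ V(p,G) : 2a ∈ F}. Then σ(T) = {r ∈ G : 2r ∈ F}. -/
open MvPolynomial
open scoped Classical

open scoped Pointwise

/-!
If `b + c = 2m` with `b, c ∈ G`, then `2m` is the midpoint of `2b` and `2c`, and `m ∈ σ(T)` forces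
`b, c ∈ σ(T)`. Hence an extreme point of `conv (2σ(T))` is `2m` with `m ∈ V(p,G)`, and then
`m ∈ Relat(2m) ⊆ T`. By Krein–Milman, `2σ(T) ⊆ conv (2T)`, which lies in `F` whenever `2T` does,
because `F` is convex. Conversely, `F` is an extreme subset of `New(p)`, so the midpoint `b + c` of
`2b` and `2c` lies in `F` only if both endpoints do; going down the recursion, `2r ∈ F` puts the
double of every element of `Relat(2r)` in `F`.
-/

theorem convexHull_extremePoints_convexHull_of_finite {E : Type*} [AddCommGroup E] [Module ℝ E]
    [TopologicalSpace E] [T2Space E] [IsTopologicalAddGroup E] [ContinuousSMul ℝ E]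
    [LocallyConvexSpace ℝ E] {s : Set E} (hs : s.Finite) :
    convexHull ℝ ((convexHull ℝ s).extremePoints ℝ) = convexHull ℝ s := by
  have hfin : ((convexHull ℝ s).extremePoints ℝ).Finite := hs.subset extremePoints_convexHull_subset
  rw [← (hfin.isClosed_convexHull ℝ).closure_eq,
    closure_convexHull_extremePoints (hs.isCompact_convexHull ℝ) (convex_convexHull ℝ s)]

section ExponentVectors

variable {n : ℕ}

theorem toR_add (a b : Fin n →₀ ℕ) : toR (a + b) = toR a + toR b := by
  ext i
  simp [toR]

theorem toR_add_self_injective : Function.Injective fun a : Fin n →₀ ℕ ↦ toR (a + a) := by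
  intro a b hab
  ext i
  have hi : (a i : ℝ) + a i = b i + b i := by simpa [toR] using congrFun hab i
  have : a i + a i = b i + b i := by exact_mod_cast hi
  lia

theorem toR_add_mem_openSegment (b c : Fin n →₀ ℕ) :
    toR (b + c) ∈ openSegment ℝ (toR (b + b)) (toR (c + c)) := by
  refine ⟨1 / 2, 1 / 2, by norm_num, by norm_num, by norm_num, ?_⟩
  simp only [toR_add]
  module

theorem IsFace.isExposed {N F : Set (Fin n → ℝ)} (hF : IsFace N F) : IsExposed ℝ N F := by
  obtain ⟨hFN, rfl | ⟨π, hzero, hpos⟩⟩ := hF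
  · exact IsExposed.refl F
  rintro ⟨x₀, hx₀⟩
  refine ⟨(-π.linear).toContinuousLinearMap, Set.ext fun x ↦ ?_⟩
  have hle (x y : Fin n → ℝ) : (-π.linear).toContinuousLinearMap y ≤
      (-π.linear).toContinuousLinearMap x ↔ π x ≤ π y := by
    have hsub : π.linear y - π.linear x = π y - π x := by
      simpa only [vsub_eq_sub, map_sub] using π.linearMap_vsub y x
    rw [LinearMap.coe_toContinuousLinearMap', LinearMap.neg_apply, LinearMap.neg_apply,
      neg_le_neg_iff, ← sub_nonneg, hsub, sub_nonneg]
  simp only [hle, Set.mem_ofPred_eq]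
  constructor
  · refine fun hx ↦ ⟨hFN hx, fun y hy ↦ ?_⟩
    rw [hzero x hx]
    by_cases hyF : y ∈ F
    · exact (hzero y hyF).ge
    · exact (hpos y ⟨hy, hyF⟩).le
  · rintro ⟨hxN, hmin⟩
    by_contra hxF
    have hx_nonpos : π x ≤ 0 := hzero x₀ hx₀ ▸ hmin x₀ (hFN hx₀)
    exact hx_nonpos.not_gt (hpos x ⟨hxN, hxF⟩)

end ExponentVectors

section Relat

variable {n : ℕ} {G : Finset (Fin n →₀ ℕ)} {T : Set (Fin n →₀ ℕ)} {a b c m v : Fin n →₀ ℕ}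

theorem mem_relat_add_self_of_mem_vSet (ha : a ∈ VSet G) : a ∈ Relat G (a + a) :=
  .base _ a ha.1 rfl fun b hb r hr hbr ↦ (ha.2 b hb r hr hbr).1

theorem relat_subset_vSet : Relat G a ⊆ VSet G := by
  intro v hv
  induction hv with
  | base a c hc hcc huniq =>
    refine ⟨hc, fun b hb r hr hbr ↦ ⟨huniq b hb r hr (hbr.trans hcc), ?_⟩⟩
    exact huniq r hr b hb ((add_comm r b).trans (hbr.trans hcc))
  | stepL _ _ _ _ _ _ _ _ _ ih => exact ih
  | stepR _ _ _ _ _ _ _ _ _ ih => exact ih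

theorem relat_add_self_subset_relat_add_s10 (hb : b ∈ G) (hc : c ∈ G) :
    Relat G (b + b) ⊆ Relat G (b + c) := by
  obtain rfl | hne := eq_or_ne b c
  · exact subset_rfl
  · exact fun v hv ↦ .stepL _ b c v hb hc hne rfl hv

theorem mem_sigmaSet_of_add_eq_add_self (hm : m ∈ sigmaSet G T) (hb : b ∈ G) (hc : c ∈ G)
    (hbc : b + c = m + m) : b ∈ sigmaSet G T :=
  ⟨hb, (relat_add_self_subset_relat_add_s10 hb hc).trans (hbc ▸ hm.2)⟩

theorem toR_add_self_mem_of_mem_relat {N F : Set (Fin n → ℝ)} (hF : IsExtreme ℝ N F)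
    (hGN : ∀ r ∈ G, toR (r + r) ∈ N) (hv : v ∈ Relat G a) (ha : toR a ∈ F) :
    toR (v + v) ∈ F := by
  induction hv with
  | base _ _ _ hcc => rwa [hcc]
  | stepL _ b r _ hb hr _ hbr _ ih =>
    exact ih (hF.left_mem_of_mem_openSegment (hGN b hb) (hGN r hr) ha
      (hbr ▸ toR_add_mem_openSegment b r))
  | stepR _ b r _ hb hr _ hbr _ ih =>
    exact ih (hF.right_mem_of_mem_openSegment (hGN b hb) (hGN r hr) ha
      (hbr ▸ toR_add_mem_openSegment b r))

theorem extremePoints_convexHull_sigmaSet_subset (G : Finset (Fin n →₀ ℕ))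
    (T : Set (Fin n →₀ ℕ)) :
    (convexHull ℝ ((fun a ↦ toR (a + a)) '' sigmaSet G T)).extremePoints ℝ ⊆
      (fun a ↦ toR (a + a)) '' T := by
  intro x hx
  obtain ⟨m, hm, rfl⟩ := extremePoints_convexHull_subset hx
  have hmem {b : Fin n →₀ ℕ} (hb : b ∈ sigmaSet G T) :
      toR (b + b) ∈ convexHull ℝ ((fun a ↦ toR (a + a)) '' sigmaSet G T) :=
    subset_convexHull ℝ _ ⟨b, hb, rfl⟩
  have hmV : m ∈ VSet G := by
    refine ⟨hm.1, fun b hb c hc hbc ↦ ?_⟩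
    have hbσ : b ∈ sigmaSet G T := mem_sigmaSet_of_add_eq_add_self hm hb hc hbc
    have hcσ : c ∈ sigmaSet G T :=
      mem_sigmaSet_of_add_eq_add_self hm hc hb ((add_comm c b).trans hbc)
    have hmid : toR (m + m) ∈ openSegment ℝ (toR (b + b)) (toR (c + c)) :=
      hbc ▸ toR_add_mem_openSegment b c
    have hends := (mem_extremePoints.1 hx).2 _ (hmem hbσ) _ (hmem hcσ) hmid
    exact hends.imp (toR_add_self_injective ·) (toR_add_self_injective ·)
  exact ⟨m, hm.2 (mem_relat_add_self_of_mem_vSet hmV), rfl⟩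

theorem toR_add_self_mem_convexHull_of_mem_sigmaSet (hm : m ∈ sigmaSet G T) :
    toR (m + m) ∈ convexHull ℝ ((fun a ↦ toR (a + a)) '' T) := by
  have hfin : ((fun a ↦ toR (a + a)) '' sigmaSet G T).Finite :=
    (G.finite_toSet.subset fun _ hr ↦ hr.1).image _
  have hmem : toR (m + m) ∈ convexHull ℝ ((fun a ↦ toR (a + a)) '' sigmaSet G T) :=
    subset_convexHull ℝ _ ⟨m, hm, rfl⟩
  rw [← convexHull_extremePoints_convexHull_of_finite hfin] at hmem
  exact convexHull_mono (extremePoints_convexHull_sigmaSet_subset G T) hmem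

end Relat

theorem statement10_general {n : ℕ} {G : Finset (Fin n →₀ ℕ)} {N F : Set (Fin n → ℝ)}
    (hGN : ∀ r ∈ G, toR (r + r) ∈ N) (hF : IsExtreme ℝ N F) (hFconv : Convex ℝ F) :
    sigmaSet G {a | a ∈ VSet G ∧ toR (a + a) ∈ F} = {r | r ∈ G ∧ toR (r + r) ∈ F} := by
  refine Set.Subset.antisymm (fun r hr ↦ ⟨hr.1, ?_⟩) fun r ⟨hrG, hrF⟩ ↦ ⟨hrG, fun v hv ↦ ?_⟩
  · refine convexHull_min ?_ hFconv (toR_add_self_mem_convexHull_of_mem_sigmaSet hr)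
    exact Set.image_subset_iff.2 fun a ha ↦ ha.2
  · exact ⟨relat_subset_vSet hv, toR_add_self_mem_of_mem_relat hF hGN hv hrF⟩

/-- for `G` with `SOSS(p,G)` and `conv(G+G) = New(p)`, a face `F` of `New(p)`
and `T = {a ∈ V(p,G) : 2a ∈ F}`, one has `σ(T) = {r ∈ G : 2r ∈ F}`. -/
theorem statement10 {n : ℕ} (p : MvPolynomial (Fin n) ℝ) (G : Finset (Fin n →₀ ℕ))
    (hG : SOSS p G)
    (hGG : convexHull ℝ (toR '' ((G : Set (Fin n →₀ ℕ)) + (G : Set (Fin n →₀ ℕ)))) = newton p)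
    (F : Set (Fin n → ℝ)) (hF : IsFace (newton p) F) :
    sigmaSet G {a | a ∈ VSet G ∧ toR (a + a) ∈ F} = {r | r ∈ G ∧ toR (r + r) ∈ F} :=
  statement10_general
    (fun r hr ↦ hGG ▸ subset_convexHull ℝ _ ⟨r + r, Set.add_mem_add hr hr, rfl⟩)
    hF.isExposed.isExtreme (hF.isExposed.convex (convex_convexHull ℝ _))
end
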